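/- Let E be a real inner product space and let n be a positive integer. Let Φ : E → (Fin n → ℝ) be a map whose output always has all coordinates in [0,1]. Let f, g : (Fin n → ℝ) → ℝ both be entry-wise concave on the unit cube, with f(X) ≥ 0 for every binary vector X ∈ {0,1}ⁿ, and with g(X) = 0 or g(X) ≥ 1 for every binary vector X ∈ {0,1}ⁿ. Let β > 0 and define the loss ℓ : E → ℝ by ℓ(θ) = f(Φ(θ)) + β·g(Φ(θ)). Fix θ ∈ E, let L > 0, and suppose ℓ is differentiable with base-point L-Lipschitz gradient on the closed ball of radius ‖∇ℓ(θ)‖/L around θ. Set Δ = ‖∇ℓ(θ)‖²/(2L). If ℓ(θ) < β + Δ, then there exists a binary vector X ∈ {0,1}ⁿ with g(X) = 0 and f(X) ≤ ℓ(θ) − Δ. -/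

import Mathlib

/-- `F` is entry-wise concave on the unit cube: for every index `i` and every point `x`
with all coordinates in `[0,1]`, the map `t ↦ F (Function.update x i t)` is concave
on `[0,1]`. -/
def EntrywiseConcave (n : ℕ) (F : (Fin n → ℝ) → ℝ) : Prop :=
  ∀ (i : Fin n) (x : Fin n → ℝ), (∀ j, x j ∈ Set.Icc (0 : ℝ) 1) →
    ConcaveOn ℝ (Set.Icc (0 : ℝ) 1) (fun t => F (Function.update x i t))

/-!
Along the segment from `θ` to `θ - ∇ℓ(θ) / L`, the loss is bounded above by its quadratic model with
curvature `L`, so the gradient step decreases the loss by at least `Δ = ‖∇ℓ(θ)‖² / (2L)`, to a value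
below `β`. A function that is concave in each coordinate is minimized in that coordinate at `0` or
`1`, so the soft output can be rounded one coordinate at a time without increasing `f + β g`. The
binary point obtained has `f + β g < β`; since `f ≥ 0` there, the penalty rules out `g ≥ 1`, whence
`g = 0`.
-/

section QuadraticBound

variable {E F : Type*} [NormedAddCommGroup E] [NormedSpace ℝ E]
  [NormedAddCommGroup F] [NormedSpace ℝ F]

theorem norm_image_sub_sub_smul_le_of_norm_deriv_sub_le_segment {f f' : ℝ → F} {a b C : ℝ}
    (hf : ∀ t ∈ Set.Icc a b, HasDerivWithinAt f (f' t) (Set.Icc a b) t)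
    (bound : ∀ t ∈ Set.Ico a b, ‖f' t - f' a‖ ≤ C * (t - a)) :
    ∀ t ∈ Set.Icc a b, ‖f t - f a - (t - a) • f' a‖ ≤ C / 2 * (t - a) ^ 2 := by
  have hremainder : ∀ t ∈ Set.Icc a b, HasDerivWithinAt
      (fun u ↦ f u - f a - (u - a) • f' a) (f' t - f' a) (Set.Icc a b) t := fun t ht ↦ by
    simpa using ((hf t ht).sub_const (f a)).fun_sub
      (((hasDerivWithinAt_id t _).sub_const a).smul_const (f' a))
  have hquadratic : ∀ t, HasDerivAt (fun u ↦ C / 2 * (u - a) ^ 2) (C * (t - a)) t := fun t ↦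
    ((((hasDerivAt_id t).sub_const a).pow 2).const_mul (C / 2)).congr_deriv (by simp; ring)
  exact image_norm_le_of_norm_deriv_right_le_deriv_boundary
    (fun t ht ↦ (hremainder t ht).continuousWithinAt)
    (fun t ht ↦ (hremainder t (Set.Ico_subset_Icc_self ht)).mono_of_mem_nhdsWithin
      (Icc_mem_nhdsGE_of_mem ht))
    (by simp) hquadratic bound

theorem norm_image_sub_sub_le_of_norm_hasFDerivWithin_sub_le {f : E → F} {f' : E → E →L[ℝ] F}
    {s : Set E} {x y : E} {L : ℝ} (hs : StarConvex ℝ x s) (hy : y ∈ s)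
    (hf : ∀ z ∈ s, HasFDerivWithinAt f (f' z) s z)
    (bound : ∀ z ∈ s, ‖f' z - f' x‖ ≤ L * ‖z - x‖) :
    ‖f y - f x - f' x (y - x)‖ ≤ L / 2 * ‖y - x‖ ^ 2 := by
  let p : ℝ → E := AffineMap.lineMap x y
  have hp : Set.MapsTo p (Set.Icc 0 1) s := by
    rw [Set.mapsTo_iff_image_subset, ← segment_eq_image_lineMap]
    exact hs.segment_subset hy
  have hderiv : ∀ t ∈ Set.Icc (0 : ℝ) 1,
      HasDerivWithinAt (f ∘ p) (f' (p t) (y - x)) (Set.Icc 0 1) t := fun t ht ↦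
    (hf (p t) (hp ht)).comp_hasDerivWithinAt t AffineMap.hasDerivWithinAt_lineMap hp
  have hbound : ∀ t ∈ Set.Ico (0 : ℝ) 1,
      ‖f' (p t) (y - x) - f' (p 0) (y - x)‖ ≤ L * ‖y - x‖ ^ 2 * (t - 0) := fun t ht ↦
    calc ‖f' (p t) (y - x) - f' (p 0) (y - x)‖
        = ‖(f' (p t) - f' x) (y - x)‖ := by simp [p]
      _ ≤ ‖f' (p t) - f' x‖ * ‖y - x‖ := ContinuousLinearMap.le_opNorm _ _
      _ ≤ L * ‖p t - x‖ * ‖y - x‖ := by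
        gcongr
        exact bound _ (hp (Set.Ico_subset_Icc_self ht))
      _ = L * ‖y - x‖ ^ 2 * (t - 0) := by
        have : ‖p t - x‖ = t * ‖y - x‖ := by
          simp [p, AffineMap.lineMap_apply, norm_smul, abs_of_nonneg ht.1]
        rw [this]
        ring
  have hend := norm_image_sub_sub_smul_le_of_norm_deriv_sub_le_segment hderiv hbound 1
    (Set.right_mem_Icc.2 zero_le_one)
  simpa [p, mul_div_right_comm] using hend

end QuadraticBound

section GradientStep

variable {E : Type*} [NormedAddCommGroup E] [InnerProductSpace ℝ E] [CompleteSpace E]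
  {ℓ : E → ℝ} {ℓ' : E → E} {s : Set E} {x : E} {L : ℝ}

theorem image_le_add_inner_add_of_norm_hasGradientWithin_sub_le {y : E}
    (hs : StarConvex ℝ x s) (hy : y ∈ s) (hℓ : ∀ z ∈ s, HasGradientWithinAt ℓ (ℓ' z) s z)
    (bound : ∀ z ∈ s, ‖ℓ' z - ℓ' x‖ ≤ L * ‖z - x‖) :
    ℓ y ≤ ℓ x + inner ℝ (ℓ' x) (y - x) + L / 2 * ‖y - x‖ ^ 2 := by
  have hmodel := norm_image_sub_sub_le_of_norm_hasFDerivWithin_sub_le hs hy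
    (fun z hz ↦ (hℓ z hz).hasFDerivWithinAt)
    (fun z hz ↦ by simpa only [← map_sub, LinearIsometryEquiv.norm_map] using bound z hz)
  rw [InnerProductSpace.toDual_apply_apply] at hmodel
  linarith [Real.le_norm_self (ℓ y - ℓ x - inner ℝ (ℓ' x) (y - x))]

theorem image_gradient_step_le (hL : 0 < L) (hs : StarConvex ℝ x s)
    (hstep : x - L⁻¹ • ℓ' x ∈ s) (hℓ : ∀ z ∈ s, HasGradientWithinAt ℓ (ℓ' z) s z)
    (bound : ∀ z ∈ s, ‖ℓ' z - ℓ' x‖ ≤ L * ‖z - x‖) :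
    ℓ (x - L⁻¹ • ℓ' x) ≤ ℓ x - ‖ℓ' x‖ ^ 2 / (2 * L) := by
  calc ℓ (x - L⁻¹ • ℓ' x)
      ≤ ℓ x + inner ℝ (ℓ' x) (x - L⁻¹ • ℓ' x - x) + L / 2 * ‖x - L⁻¹ • ℓ' x - x‖ ^ 2 :=
        image_le_add_inner_add_of_norm_hasGradientWithin_sub_le hs hstep hℓ bound
    _ = ℓ x - L⁻¹ * ‖ℓ' x‖ ^ 2 + L / 2 * (L⁻¹ * ‖ℓ' x‖) ^ 2 := by
        rw [sub_sub_cancel_left, inner_neg_right, real_inner_smul_right,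
          real_inner_self_eq_norm_sq, norm_neg, norm_smul, Real.norm_of_nonneg (by positivity),
          ← sub_eq_add_neg]
    _ = ℓ x - ‖ℓ' x‖ ^ 2 / (2 * L) := by
        field_simp
        ring

end GradientStep

namespace EntrywiseConcave

variable {n : ℕ} {F G : (Fin n → ℝ) → ℝ} {x : Fin n → ℝ}

theorem add (hF : EntrywiseConcave n F) (hG : EntrywiseConcave n G) :
    EntrywiseConcave n (fun x ↦ F x + G x) :=
  fun i x hx ↦ (hF i x hx).add (hG i x hx)

theorem const_mul {c : ℝ} (hF : EntrywiseConcave n F) (hc : 0 ≤ c) :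
    EntrywiseConcave n (fun x ↦ c * F x) :=
  fun i x hx ↦ (hF i x hx).smul hc

theorem exists_update_le (hF : EntrywiseConcave n F) (hx : ∀ j, x j ∈ Set.Icc (0 : ℝ) 1)
    (i : Fin n) : ∃ b : ℝ, (b = 0 ∨ b = 1) ∧ F (Function.update x i b) ≤ F x := by
  have hmin : min (F (Function.update x i 0)) (F (Function.update x i 1)) ≤ F x := by
    simpa only [Function.update_eq_self] using (hF i x hx).min_le_of_mem_Icc
      (Set.left_mem_Icc.2 zero_le_one) (Set.right_mem_Icc.2 zero_le_one) (hx i)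
  rcases min_le_iff.1 hmin with h | h
  · exact ⟨0, .inl rfl, h⟩
  · exact ⟨1, .inr rfl, h⟩

theorem exists_binary_on_le (hF : EntrywiseConcave n F) (hx : ∀ j, x j ∈ Set.Icc (0 : ℝ) 1)
    (s : Finset (Fin n)) :
    ∃ y : Fin n → ℝ, (∀ j, y j ∈ Set.Icc (0 : ℝ) 1) ∧ (∀ j ∈ s, y j = 0 ∨ y j = 1) ∧
      F y ≤ F x := by
  induction s using Finset.induction_on with
  | empty => exact ⟨x, hx, by simp, le_rfl⟩
  | insert i s _ ih =>
    obtain ⟨y, hy, hys, hyx⟩ := ih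
    obtain ⟨b, hb, hby⟩ := hF.exists_update_le hy i
    have hb_mem : b ∈ Set.Icc (0 : ℝ) 1 := by rcases hb with rfl | rfl <;> simp
    refine ⟨Function.update y i b, ?_, ?_, hby.trans hyx⟩
    · exact (Function.forall_update_iff y fun _ t ↦ t ∈ Set.Icc (0 : ℝ) 1).2
        ⟨hb_mem, fun j _ ↦ hy j⟩
    · exact (Function.forall_update_iff y fun j t ↦ j ∈ insert i s → t = 0 ∨ t = 1).2
        ⟨fun _ ↦ hb, fun j hji hj ↦ hys j (Finset.mem_of_mem_insert_of_ne hj hji)⟩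

theorem exists_binary_le (hF : EntrywiseConcave n F) (hx : ∀ j, x j ∈ Set.Icc (0 : ℝ) 1) :
    ∃ X : Fin n → ℝ, (∀ i, X i = 0 ∨ X i = 1) ∧ F X ≤ F x := by
  obtain ⟨X, -, hX, hXx⟩ := hF.exists_binary_on_le hx Finset.univ
  exact ⟨X, fun i ↦ hX i (Finset.mem_univ i), hXx⟩

theorem exists_binary_feasible_le_of_penalized_lt {f g : (Fin n → ℝ) → ℝ} {β : ℝ}
    (hf : EntrywiseConcave n f) (hg : EntrywiseConcave n g)
    (hf0 : ∀ X : Fin n → ℝ, (∀ i, X i = 0 ∨ X i = 1) → 0 ≤ f X)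
    (hg01 : ∀ X : Fin n → ℝ, (∀ i, X i = 0 ∨ X i = 1) → g X = 0 ∨ 1 ≤ g X)
    (hβ : 0 ≤ β) (hx : ∀ j, x j ∈ Set.Icc (0 : ℝ) 1) (hlt : f x + β * g x < β) :
    ∃ X : Fin n → ℝ, (∀ i, X i = 0 ∨ X i = 1) ∧ g X = 0 ∧ f X ≤ f x + β * g x := by
  obtain ⟨X, hX, hXx⟩ := (hf.add (hg.const_mul hβ)).exists_binary_le hx
  have hgX : g X = 0 := (hg01 X hX).resolve_right fun h ↦ by
    have hpenalty : β ≤ β * g X := le_mul_of_one_le_right hβ h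
    linarith [hf0 X hX]
  exact ⟨X, hX, hgX, by simpa [hgX] using hXx⟩

end EntrywiseConcave

theorem performance_guarantee_10
    {E : Type*} [NormedAddCommGroup E] [InnerProductSpace ℝ E] [CompleteSpace E]
    (n : ℕ) (hn : 0 < n) (Φ : E → Fin n → ℝ)
    (hΦ : ∀ (θ : E) (i : Fin n), Φ θ i ∈ Set.Icc (0 : ℝ) 1)
    (f g : (Fin n → ℝ) → ℝ)
    (hf : EntrywiseConcave n f) (hg : EntrywiseConcave n g)
    (hf0 : ∀ X : Fin n → ℝ, (∀ i, X i = 0 ∨ X i = 1) → 0 ≤ f X)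
    (hg01 : ∀ X : Fin n → ℝ, (∀ i, X i = 0 ∨ X i = 1) → g X = 0 ∨ 1 ≤ g X)
    (β : ℝ) (hβ : 0 < β)
    (ℓ : E → ℝ) (hℓ : ∀ θ, ℓ θ = f (Φ θ) + β * g (Φ θ))
    (θ : E) (L : ℝ) (hL : 0 < L)
    (hdiff : ∀ θ' : E, ‖θ' - θ‖ ≤ ‖gradient ℓ θ‖ / L → DifferentiableAt ℝ ℓ θ')
    (hlip : ∀ θ' : E, ‖θ' - θ‖ ≤ ‖gradient ℓ θ‖ / L →
      ‖gradient ℓ θ' - gradient ℓ θ‖ ≤ L * ‖θ' - θ‖)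
    (Δ : ℝ) (hΔ : Δ = ‖gradient ℓ θ‖ ^ 2 / (2 * L))
    (hloss : ℓ θ < β + Δ) :
    ∃ X : Fin n → ℝ, (∀ i, X i = 0 ∨ X i = 1) ∧ g X = 0 ∧ f X ≤ ℓ θ - Δ := by
  have hstep : θ - L⁻¹ • gradient ℓ θ ∈ Metric.closedBall θ (‖gradient ℓ θ‖ / L) := by
    simp [norm_smul, abs_of_pos hL, div_eq_inv_mul]
  have hdescent : ℓ (θ - L⁻¹ • gradient ℓ θ) ≤ ℓ θ - Δ := by
    rw [hΔ]
    refine image_gradient_step_le hL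
      ((convex_closedBall θ _).starConvex (Metric.mem_closedBall_self (by positivity))) hstep
      (fun z hz ↦ ?_) (fun z hz ↦ hlip z (mem_closedBall_iff_norm.1 hz))
    exact (hdiff z (mem_closedBall_iff_norm.1 hz)).hasGradientAt.hasFDerivAt.hasFDerivWithinAt
  have hlt : ℓ (θ - L⁻¹ • gradient ℓ θ) < β := by linarith
  rw [hℓ (θ - L⁻¹ • gradient ℓ θ)] at hdescent hlt
  obtain ⟨X, hX, hgX, hfX⟩ :=
    hf.exists_binary_feasible_le_of_penalized_lt hg hf0 hg01 hβ.le (hΦ _) hlt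
  exact ⟨X, hX, hgX, hfX.trans hdescent⟩
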